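/- The set of rational numbers r for which there exist regular integers p and q with 1 < p ≤ 125, 1 < q ≤ 125, r = p/q and 1 < r < 1 + √2 has exactly 47 elements. -/

import Mathlib

/-- A positive integer is regular if it is of the form `2^a · 3^b · 5^c`. -/
def Regular (n : ℕ) : Prop := ∃ a b c : ℕ, n = 2 ^ a * 3 ^ b * 5 ^ c

/-!
Each exponent in the factorization of `n` is at most `n`, so `n` is regular exactly when it divides
`30 ^ n`. Squaring turns the irrational bound `p / q < 1 + √2` into `p² - q² < 2pq`. Both conditions
are thus decidable by integer arithmetic, and the ratios can be counted.
-/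

theorem regular_of_dvd_thirty_pow {n k : ℕ} (h : n ∣ 30 ^ k) : Regular n := by
  rw [show 30 = 2 * 3 * 5 by norm_num, mul_pow, mul_pow] at h
  obtain ⟨m, z, hm, hz, rfl⟩ := Nat.dvd_mul.1 h
  obtain ⟨x, y, hx, hy, rfl⟩ := Nat.dvd_mul.1 hm
  obtain ⟨a, -, rfl⟩ := (Nat.dvd_prime_pow Nat.prime_two).1 hx
  obtain ⟨b, -, rfl⟩ := (Nat.dvd_prime_pow Nat.prime_three).1 hy
  obtain ⟨c, -, rfl⟩ := (Nat.dvd_prime_pow Nat.prime_five).1 hz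
  exact ⟨a, b, c, rfl⟩

theorem Regular.pos {n : ℕ} (h : Regular n) : 0 < n := by
  obtain ⟨a, b, c, rfl⟩ := h
  positivity

theorem Regular.dvd_thirty_pow_self {n : ℕ} (h : Regular n) : n ∣ 30 ^ n := by
  have exponent_le {k e : ℕ} (hk : 1 < k) (hd : k ^ e ∣ n) : e ≤ n :=
    (Nat.lt_pow_self hk).le.trans (Nat.le_of_dvd h.pos hd)
  obtain ⟨a, b, c, hn⟩ := h
  have ha : a ≤ n := exponent_le one_lt_two (hn ▸ (Dvd.intro _ rfl).mul_right _)
  have hb : b ≤ n := exponent_le (k := 3) (by norm_num) (hn ▸ (Dvd.intro_left _ rfl).mul_right _)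
  have hc : c ≤ n := exponent_le (k := 5) (by norm_num) (hn ▸ Dvd.intro_left _ rfl)
  calc
    n = 2 ^ a * 3 ^ b * 5 ^ c := hn
    _ ∣ 2 ^ n * 3 ^ n * 5 ^ n :=
      mul_dvd_mul (mul_dvd_mul (pow_dvd_pow 2 ha) (pow_dvd_pow 3 hb)) (pow_dvd_pow 5 hc)
    _ = 30 ^ n := by norm_num [← mul_pow]

theorem regular_iff_dvd_thirty_pow_self {n : ℕ} : Regular n ↔ n ∣ 30 ^ n :=
  ⟨Regular.dvd_thirty_pow_self, regular_of_dvd_thirty_pow⟩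

instance : DecidablePred Regular := fun _ =>
  decidable_of_iff' _ regular_iff_dvd_thirty_pow_self

theorem div_lt_one_add_sqrt_two_iff {p q : ℝ} (hq : 0 < q) (hqp : q ≤ p) :
    p / q < 1 + √2 ↔ p ^ 2 - q ^ 2 < 2 * p * q := by
  have hr : 0 ≤ p / q - 1 := sub_nonneg.2 ((one_le_div hq).2 hqp)
  calc
    p / q < 1 + √2 ↔ p / q - 1 < √2 := sub_lt_iff_lt_add'.symm
    _ ↔ (p / q - 1) ^ 2 < 2 := Real.lt_sqrt hr
    _ ↔ (p - q) ^ 2 < 2 * q ^ 2 := by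
      rw [div_sub_one hq.ne', div_pow, div_lt_iff₀ (pow_pos hq 2)]
    _ ↔ p ^ 2 - q ^ 2 < 2 * p * q := by constructor <;> intro h <;> linarith

theorem one_lt_div_and_div_lt_one_add_sqrt_two_iff {p q : ℕ} (hq : 0 < q) :
    1 < (p : ℝ) / q ∧ (p : ℝ) / q < 1 + √2 ↔ q < p ∧ p ^ 2 < 2 * p * q + q ^ 2 := by
  have hq' : (0 : ℝ) < q := Nat.cast_pos.2 hq
  rw [one_lt_div hq', Nat.cast_lt]
  refine and_congr_right fun hqp => ?_
  rw [div_lt_one_add_sqrt_two_iff hq' (Nat.cast_le.2 hqp.le), sub_lt_iff_lt_add]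
  norm_cast

/-- The regular integers `n` with `1 < n ≤ N`. -/
def regularsUpTo (N : ℕ) : Finset ℕ := {n ∈ Finset.Ioc 1 N | Regular n}

/-- The admissible ratios `p / q` of regular integers `1 < p, q ≤ N`. The condition
`1 < p / q < 1 + √2` is encoded in natural numbers, and imposed on the pairs `(p, q)` before equal
ratios are identified, so that the kernel can count the ratios quickly. -/
def admissibleRatios (N : ℕ) : Finset ℚ :=
  {x ∈ regularsUpTo N ×ˢ regularsUpTo N |
    x.2 < x.1 ∧ x.1 ^ 2 < 2 * x.1 * x.2 + x.2 ^ 2}.image fun x => (x.1 : ℚ) / x.2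

theorem coe_admissibleRatios (N : ℕ) :
    (admissibleRatios N : Set ℚ) =
      {r : ℚ | ∃ p q : ℕ, Regular p ∧ Regular q ∧ 1 < p ∧ p ≤ N ∧ 1 < q ∧ q ≤ N ∧
        r = (p : ℚ) / q ∧ 1 < (r : ℝ) ∧ (r : ℝ) < 1 + √2} := by
  ext r
  simp only [admissibleRatios, regularsUpTo, Finset.mem_coe, Finset.mem_image, Finset.mem_filter,
    Finset.mem_product, Finset.mem_Ioc, Prod.exists, Set.mem_ofPred_eq]
  refine exists₂_congr fun p q => ?_
  have bounds_iff (hr : r = (p : ℚ) / q) (hq : 1 < q) :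
      1 < (r : ℝ) ∧ (r : ℝ) < 1 + √2 ↔ q < p ∧ p ^ 2 < 2 * p * q + q ^ 2 := by
    rw [hr, Rat.cast_div, Rat.cast_natCast, Rat.cast_natCast]
    exact one_lt_div_and_div_lt_one_add_sqrt_two_iff (zero_lt_one.trans hq)
  grind

theorem card_admissibleRatios_125 : (admissibleRatios 125).card = 47 := by
  decide +kernel

/-- There are exactly 47 admissible ratios `r = p/q` with regular integers
`1 < p ≤ 125` and `1 < q ≤ 125` and `1 < r < 1 + √2` (Procedure 2). -/
theorem procedure_two_card :
    {r : ℚ | ∃ p q : ℕ, Regular p ∧ Regular q ∧ 1 < p ∧ p ≤ 125 ∧ 1 < q ∧ q ≤ 125 ∧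
      r = (p : ℚ) / q ∧ 1 < (r : ℝ) ∧ (r : ℝ) < 1 + Real.sqrt 2}.ncard = 47 := by
  rw [← coe_admissibleRatios, Set.ncard_coe_finset, card_admissibleRatios_125]
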